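/- arXiv:2403.13757 — 2 statements merged into one kernel-verified Lean document; each statement's English description precedes it below -/
import Mathlib

section
/- Fix w ∈ (0, 1) and let ρ = (1 − √(1−w))/(1 + √(1−w)). Then as h → ∞ through positive reals, k_h(w) := w^h ₂F₁(h, h; 2h; w) satisfies k_h(w) / [(4ρ)^h / √(1−ρ²)] → 1. -/
open Filter Topology

/-- The Gauss hypergeometric function `₂F₁(a,b;c;x)`, defined by its power series. -/
noncomputable def twoF1 (a b c x : ℝ) : ℝ :=
  ∑' n : ℕ, (Real.Gamma (a + n) * Real.Gamma (b + n) * Real.Gamma c) /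
      (Real.Gamma a * Real.Gamma b * Real.Gamma (c + n) * n.factorial) * x ^ n

open MeasureTheory Real in
lemma wat_cov (r h : ℝ) (r0 : 0 < r) (r1 : r < 1) (hh : 1 ≤ h) :
    ∫ x in (0:ℝ)..π, sin x ^ (2 * h - 1) * (1 + r ^ 2 - 2 * r * cos x) ^ (-h) =
      ∫ x in (0:ℝ)..π, sin x ^ (2 * h - 1) * (1 / √(1 - r ^ 2 * sin x ^ 2)) := by
  have hpos : ∀ x, 0 < 1 - r ^ 2 * sin x ^ 2 := by
    intro x
    have : sin x ^ 2 ≤ 1 := sin_sq_le_one x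
    nlinarith [sq_nonneg (sin x)]
  have hlt : ∀ x, -1 < r * sin x ∧ r * sin x < 1 := by
    intro x
    constructor <;> nlinarith [neg_one_le_sin x, sin_le_one x]
  have hD : ∀ x, 0 < √(1 - r ^ 2 * sin x ^ 2) - r * cos x := by
    intro x
    rw [sub_pos]
    apply lt_of_le_of_lt (le_abs_self _)
    rw [← Real.sqrt_sq_eq_abs]
    apply Real.sqrt_lt_sqrt (sq_nonneg _)
    nlinarith [sin_sq_add_cos_sq x]
  have key := intervalIntegral.integral_comp_mul_deriv (a := 0) (b := π)
    (f := fun x => x - arcsin (r * sin x))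
    (f' := fun x => 1 - 1 / √(1 - (r * sin x) ^ 2) * (r * cos x))
    (g := fun x => sin x ^ (2 * h - 1) * (1 + r ^ 2 - 2 * r * cos x) ^ (-h)) ?_ ?_ ?_
  · simp only [sin_zero, sin_pi, mul_zero, arcsin_zero, sub_zero] at key
    rw [← key]
    apply intervalIntegral.integral_congr
    intro x hx
    rw [Set.uIcc_of_le pi_pos.le] at hx
    have hs : 0 ≤ sin x := sin_nonneg_of_mem_Icc hx
    simp only [Function.comp]
    have hQ : 0 < √(1 - r ^ 2 * sin x ^ 2) := Real.sqrt_pos.2 (hpos x)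
    have hQ2 : √(1 - r ^ 2 * sin x ^ 2) ^ 2 = 1 - r ^ 2 * sin x ^ 2 := Real.sq_sqrt (hpos x).le
    have hDx := hD x
    rw [sin_sub, cos_sub, cos_arcsin, sin_arcsin (hlt x).1.le (hlt x).2.le, mul_pow]
    set Q := √(1 - r ^ 2 * sin x ^ 2) with hQdef
    have e1 : sin x * Q - cos x * (r * sin x) = sin x * (Q - r * cos x) := by ring
    have e2 : 1 + r ^ 2 - 2 * r * (cos x * Q + sin x * (r * sin x)) = (Q - r * cos x) ^ 2 := by
      have := sin_sq_add_cos_sq x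
      have h2 : cos x ^ 2 = 1 - sin x ^ 2 := by linarith
      linear_combination (-1) * hQ2 - r ^ 2 * h2
    have e3 : 1 - 1 / Q * (r * cos x) = (Q - r * cos x) / Q := by field_simp
    rw [e1, e2, e3, Real.mul_rpow hs hDx.le]
    set D := Q - r * cos x
    have e4 : (D ^ 2) ^ (-h) = D ^ (-(2 * h)) := by
      rw [← Real.rpow_natCast, ← Real.rpow_mul hDx.le]; congr 1; push_cast; ring
    have e5 : D ^ (2 * h - 1) * D ^ (-(2 * h)) * D = 1 := by
      rw [← Real.rpow_add hDx, ← Real.rpow_add_one hDx.ne']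
      rw [show 2 * h - 1 + -(2 * h) + 1 = 0 by ring, Real.rpow_zero]
    rw [e4]
    calc _ = sin x ^ (2 * h - 1) * (D ^ (2 * h - 1) * D ^ (-(2 * h)) * D) / Q := by ring
      _ = _ := by rw [e5]; ring
  · intro x _
    have h1 : HasDerivAt (fun x => r * sin x) (r * cos x) x := (hasDerivAt_sin x).const_mul r
    have h2 := (Real.hasDerivAt_arcsin (hlt x).1.ne' (hlt x).2.ne)
    exact (hasDerivAt_id x).sub (HasDerivAt.comp (h₂ := arcsin) x h2 h1)
  · apply Continuous.continuousOn
    have : ∀ x, √(1 - (r * sin x) ^ 2) ≠ 0 := fun x => by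
      rw [mul_pow]; exact (Real.sqrt_pos.2 (hpos x)).ne'
    fun_prop (disch := assumption)
  · have : ∀ x, 1 + r ^ 2 - 2 * r * cos x ≠ 0 := fun x => by
      have := cos_le_one x
      nlinarith [sq_nonneg (1 - r), mul_pos r0 r0]
    apply Continuous.mul
    · exact continuous_sin.rpow_const fun x => Or.inr (by linarith)
    · exact Continuous.rpow_const (by fun_prop) fun x => Or.inl (this x)

open MeasureTheory Real in
lemma wat_cont (h : ℝ) (hh : 1 ≤ h) : Continuous fun x => sin x ^ (2 * h - 1) :=
  continuous_sin.rpow_const fun x => Or.inr (by linarith)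

open MeasureTheory Real in
lemma wat_mom_succ (h : ℝ) (hh : 1 ≤ h) (n : ℕ) :
    (2 * h + n) * ∫ x in (0:ℝ)..π, sin x ^ (2 * h - 1) * ((1 + cos x) / 2) ^ (n + 1) =
      (h + n) * ∫ x in (0:ℝ)..π, sin x ^ (2 * h - 1) * ((1 + cos x) / 2) ^ n := by
  have hc := wat_cont h hh
  have key := intervalIntegral.integral_eq_sub_of_hasDerivAt (a := 0) (b := π)
    (f := fun x => sin x ^ (2 * h) * ((1 + cos x) / 2) ^ n)
    (f' := fun x => (4 * h + 2 * n) * (sin x ^ (2 * h - 1) * ((1 + cos x) / 2) ^ (n + 1)) -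
      (2 * h + 2 * n) * (sin x ^ (2 * h - 1) * ((1 + cos x) / 2) ^ n)) ?_ ?_
  · rw [intervalIntegral.integral_sub, intervalIntegral.integral_const_mul,
      intervalIntegral.integral_const_mul] at key
    · simp only [sin_zero, sin_pi] at key
      rw [Real.zero_rpow (by linarith)] at key
      linarith
    · exact Continuous.intervalIntegrable (by fun_prop) _ _
    · exact Continuous.intervalIntegrable (by fun_prop) _ _
  · intro x hx
    rw [Set.uIcc_of_le pi_pos.le] at hx
    have hs : 0 ≤ sin x := sin_nonneg_of_mem_Icc hx
    have h1 := (hasDerivAt_sin x).rpow_const (p := 2 * h) (Or.inr (by linarith))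
    have h2 := (((hasDerivAt_cos x).const_add 1).div_const 2).pow n
    convert! h1.mul h2 using 1
    have e : sin x ^ (2 * h) = sin x ^ (2 * h - 1) * sin x := by
      rw [← Real.rpow_add_one' hs (by linarith)]; ring_nf
    have e2 : sin x ^ 2 = 1 - cos x ^ 2 := by have := sin_sq_add_cos_sq x; linarith
    rw [e]
    rcases n with _ | n
    · simp; ring
    · simp only [Pi.pow_apply, Nat.add_sub_cancel]
      push_cast
      linear_combination (sin x ^ (2 * h - 1) * ((1 + cos x) / 2) ^ n * (n + 1) / 2) * e2
  · exact Continuous.intervalIntegrable (by fun_prop) _ _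

open MeasureTheory Real in
lemma wat_mom (h : ℝ) (hh : 1 ≤ h) (n : ℕ) :
    ∫ x in (0:ℝ)..π, sin x ^ (2 * h - 1) * ((1 + cos x) / 2) ^ n =
      (Gamma (h + n) * Gamma (2 * h)) / (Gamma h * Gamma (2 * h + n)) *
        ∫ x in (0:ℝ)..π, sin x ^ (2 * h - 1) := by
  have g1 : Gamma h ≠ 0 := (Real.Gamma_pos_of_pos (by linarith)).ne'
  have g2 : Gamma (2 * h) ≠ 0 := (Real.Gamma_pos_of_pos (by linarith)).ne'
  induction n with
  | zero => simp; field_simp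
  | succ n ih =>
    have p1 : (0:ℝ) < h + n := by positivity
    have p2 : (0:ℝ) < 2 * h + n := by positivity
    have g3 : Gamma (2 * h + n) ≠ 0 := (Real.Gamma_pos_of_pos p2).ne'
    have := wat_mom_succ h hh n
    rw [ih] at this
    rw [Nat.cast_add, Nat.cast_one, ← add_assoc, ← add_assoc, Real.Gamma_add_one p1.ne',
      Real.Gamma_add_one p2.ne']
    apply mul_left_cancel₀ p2.ne'
    rw [this]
    field_simp

open Real in
lemma wat_choose (h : ℝ) (hh : 1 ≤ h) (n : ℕ) :
    Ring.choose (h + n - 1) n = Gamma (h + n) / (Gamma h * n.factorial) := by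
  have g1 : Gamma h ≠ 0 := (Real.Gamma_pos_of_pos (by linarith)).ne'
  rw [← Ring.multichoose_eq]
  have h1 := Ring.factorial_nsmul_multichoose_eq_ascPochhammer h n
  rw [Polynomial.ascPochhammer_smeval_eq_eval, nsmul_eq_mul] at h1
  have h2 : ∀ n : ℕ, (ascPochhammer ℝ n).eval h * Gamma h = Gamma (h + n) := by
    intro n
    induction n with
    | zero => simp
    | succ n ih =>
      have p1 : (0:ℝ) < h + n := by positivity
      rw [ascPochhammer_succ_eval, Nat.cast_add, Nat.cast_one, ← add_assoc,
        Real.Gamma_add_one p1.ne', ← ih]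
      ring
  rw [← h2 n, ← h1]
  have : (n.factorial : ℝ) ≠ 0 := by positivity
  field_simp

open Real in
lemma wat_binom (h : ℝ) (hh : 1 ≤ h) (x : ℝ) (x0 : 0 ≤ x) (x1 : x < 1) :
    HasSum (fun n : ℕ => Gamma (h + n) / (Gamma h * n.factorial) * x ^ n) ((1 - x) ^ (-h)) := by
  have H := (one_div_one_sub_rpow_hasFPowerSeriesOnBall_zero h).hasSum (y := x) (by
    simp [enorm_eq_nnnorm, ← NNReal.coe_lt_coe, abs_of_nonneg x0, x1])
  simp only [zero_add, FormalMultilinearSeries.ofScalars_apply_eq, smul_eq_mul] at H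
  rw [Real.rpow_neg (by linarith), ← one_div]
  simpa only [wat_choose h hh] using H

open MeasureTheory Real in
lemma wat_euler (w h : ℝ) (hw0 : 0 < w) (hw1 : w < 1) (hh : 1 ≤ h) :
    twoF1 h h (2 * h) w * ∫ x in (0:ℝ)..π, sin x ^ (2 * h - 1) =
      ∫ x in (0:ℝ)..π, sin x ^ (2 * h - 1) * (1 - w * ((1 + cos x) / 2)) ^ (-h) := by
  have hc := wat_cont h hh
  have ht : ∀ x : ℝ, 0 ≤ (1 + cos x) / 2 ∧ (1 + cos x) / 2 ≤ 1 := fun x => by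
    constructor <;> linarith [neg_one_le_cos x, cos_le_one x]
  have hg : ∀ n : ℕ, 0 ≤ Gamma (h + n) / (Gamma h * n.factorial) := fun n => by
    have := Real.Gamma_pos_of_pos (show 0 < h + n by positivity)
    have := Real.Gamma_pos_of_pos (show 0 < h by positivity)
    positivity
  have key := intervalIntegral.hasSum_integral_of_dominated_convergence (μ := volume)
    (a := 0) (b := π)
    (F := fun (n : ℕ) x => sin x ^ (2 * h - 1) *
      (Gamma (h + n) / (Gamma h * n.factorial) * (w * ((1 + cos x) / 2)) ^ n))
    (f := fun x => sin x ^ (2 * h - 1) * (1 - w * ((1 + cos x) / 2)) ^ (-h))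
    (fun (n : ℕ) _ => Gamma (h + n) / (Gamma h * n.factorial) * w ^ n) ?_ ?_ ?_ ?_ ?_
  · rw [← key.tsum_eq, twoF1, ← tsum_mul_right]
    congr 1
    ext n
    have : ∀ x : ℝ, sin x ^ (2 * h - 1) *
      (Gamma (h + n) / (Gamma h * n.factorial) * (w * ((1 + cos x) / 2)) ^ n) =
      (Gamma (h + n) / (Gamma h * n.factorial) * w ^ n) *
        (sin x ^ (2 * h - 1) * ((1 + cos x) / 2) ^ n) := fun x => by rw [mul_pow]; ring
    simp only [this]
    rw [intervalIntegral.integral_const_mul, wat_mom h hh n]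
    ring
  · intro n
    exact Continuous.aestronglyMeasurable (by fun_prop)
  · intro n
    refine Eventually.of_forall fun x hx => ?_
    rw [Set.uIoc_of_le pi_pos.le] at hx
    have hs : 0 ≤ sin x := sin_nonneg_of_mem_Icc ⟨hx.1.le, hx.2⟩
    have hs1 : sin x ^ (2 * h - 1) ≤ 1 := Real.rpow_le_one hs (sin_le_one x) (by linarith)
    have hs0 : 0 ≤ sin x ^ (2 * h - 1) := Real.rpow_nonneg hs _
    have h0 := ht x
    have h3 : (w * ((1 + cos x) / 2)) ^ n ≤ w ^ n := by
      apply pow_le_pow_left₀ (mul_nonneg hw0.le h0.1)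
      nlinarith
    have h4 : 0 ≤ (w * ((1 + cos x) / 2)) ^ n := pow_nonneg (mul_nonneg hw0.le h0.1) _
    have h5 := mul_nonneg (hg n) h4
    rw [Real.norm_of_nonneg (mul_nonneg hs0 h5)]
    exact (mul_le_of_le_one_left h5 hs1).trans (mul_le_mul_of_nonneg_left h3 (hg n))
  · exact Eventually.of_forall fun x _ => (wat_binom h hh w hw0.le hw1).summable
  · exact intervalIntegrable_const
  · refine Eventually.of_forall fun x _ => ?_
    have h0 := ht x
    exact (wat_binom h hh _ (mul_nonneg hw0.le h0.1) (by nlinarith)).mul_left _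

open MeasureTheory Real in
lemma wat_J_pos (h : ℝ) (hh : 1 ≤ h) : 0 < ∫ x in (0:ℝ)..π, sin x ^ (2 * h - 1) := by
  apply intervalIntegral.intervalIntegral_pos_of_pos_on
  · exact (wat_cont h hh).intervalIntegrable _ _
  · intro x hx
    exact Real.rpow_pos_of_pos (sin_pos_of_mem_Ioo hx) _
  · exact pi_pos

open MeasureTheory Real in
lemma wat_cos_sq (h : ℝ) (hh : 1 ≤ h) :
    ∫ x in (0:ℝ)..π, sin x ^ (2 * h - 1) * cos x ^ 2 =
      1 / (2 * h + 1) * ∫ x in (0:ℝ)..π, sin x ^ (2 * h - 1) := by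
  have hc := wat_cont h hh
  have m0 := wat_mom_succ h hh 0
  have m1 := wat_mom_succ h hh 1
  have : ∀ x : ℝ, sin x ^ (2 * h - 1) * cos x ^ 2 =
      4 * (sin x ^ (2 * h - 1) * ((1 + cos x) / 2) ^ (1 + 1)) -
      4 * (sin x ^ (2 * h - 1) * ((1 + cos x) / 2) ^ 1) + sin x ^ (2 * h - 1) := fun x => by ring
  simp only [this]
  rw [intervalIntegral.integral_add, intervalIntegral.integral_sub,
    intervalIntegral.integral_const_mul, intervalIntegral.integral_const_mul]
  · simp only [zero_add, Nat.cast_zero, add_zero, pow_zero, mul_one, Nat.cast_one] at m0 m1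
    generalize (∫ x in (0:ℝ)..π, sin x ^ (2 * h - 1) * ((1 + cos x) / 2) ^ (1 + 1)) = A at *
    generalize (∫ x in (0:ℝ)..π, sin x ^ (2 * h - 1) * ((1 + cos x) / 2) ^ 1) = B at *
    generalize (∫ x in (0:ℝ)..π, sin x ^ (2 * h - 1)) = J at *
    have hB : B = J / 2 := by
      apply mul_left_cancel₀ (show 2 * h ≠ 0 by positivity)
      linarith
    have h1 : 2 * h + 1 ≠ 0 := by positivity
    subst hB
    field_simp
    linarith
  all_goals exact Continuous.intervalIntegrable (by fun_prop) _ _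

open MeasureTheory Real in
lemma wat_bound (r h : ℝ) (r0 : 0 < r) (r1 : r < 1) (hh : 1 ≤ h) :
    |(∫ x in (0:ℝ)..π, sin x ^ (2 * h - 1) * (1 / √(1 - r ^ 2 * sin x ^ 2))) /
      (∫ x in (0:ℝ)..π, sin x ^ (2 * h - 1)) - 1 / √(1 - r ^ 2)| ≤
      (1 / √(1 - r ^ 2) ^ 3) * (1 / (2 * h + 1)) := by
  have hc := wat_cont h hh
  have hJ := wat_J_pos h hh
  have hcs := wat_cos_sq h hh
  have hpos : ∀ x, 0 < 1 - r ^ 2 * sin x ^ 2 := by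
    intro x
    have : sin x ^ 2 ≤ 1 := sin_sq_le_one x
    nlinarith [sq_nonneg (sin x)]
  have hne : ∀ x, √(1 - r ^ 2 * sin x ^ 2) ≠ 0 := fun x => (Real.sqrt_pos.2 (hpos x)).ne'
  have ha : 0 < √(1 - r ^ 2) := Real.sqrt_pos.2 (by nlinarith)
  set a := √(1 - r ^ 2) with hadef
  have ha2 : a ^ 2 = 1 - r ^ 2 := Real.sq_sqrt (by nlinarith)
  have hpt : ∀ x, 1 / a - 1 / a ^ 3 * cos x ^ 2 ≤ 1 / √(1 - r ^ 2 * sin x ^ 2) ∧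
      1 / √(1 - r ^ 2 * sin x ^ 2) ≤ 1 / a := by
    intro x
    have hb2 : √(1 - r ^ 2 * sin x ^ 2) ^ 2 = 1 - r ^ 2 * sin x ^ 2 := Real.sq_sqrt (hpos x).le
    have hab : a ≤ √(1 - r ^ 2 * sin x ^ 2) := by
      apply Real.sqrt_le_sqrt
      nlinarith [sin_sq_le_one x]
    set b := √(1 - r ^ 2 * sin x ^ 2)
    have hb : 0 < b := ha.trans_le hab
    have hd : b ^ 2 - a ^ 2 = r ^ 2 * cos x ^ 2 := by
      have := sin_sq_add_cos_sq x
      rw [ha2, hb2]; linear_combination (-r ^ 2) * this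
    have hd' : b ^ 2 - a ^ 2 ≤ cos x ^ 2 := by
      rw [hd]; nlinarith [sq_nonneg (cos x)]
    refine ⟨?_, one_div_le_one_div_of_le ha hab⟩
    have e : 1 / a - 1 / b ≤ 1 / a ^ 3 * (b ^ 2 - a ^ 2) := by
      have e1 : 1 / a - 1 / b = (b - a) / (a * b) := by field_simp
      rw [e1, div_mul_eq_mul_div, one_mul, div_le_div_iff₀ (by positivity) (by positivity)]
      have : a ^ 3 ≤ (b + a) * (a * b) := by
        nlinarith [mul_pos ha hb, mul_le_mul hab hab ha.le hb.le,
          mul_nonneg (mul_pos ha ha).le (sub_nonneg.2 hab), mul_pos (mul_pos ha hb) hb]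
      nlinarith [mul_le_mul_of_nonneg_left this (sub_nonneg.2 hab)]
    have : 1 / a ^ 3 * (b ^ 2 - a ^ 2) ≤ 1 / a ^ 3 * cos x ^ 2 :=
      mul_le_mul_of_nonneg_left hd' (by positivity)
    linarith
  have hs0 : ∀ x ∈ Set.Icc 0 π, 0 ≤ sin x ^ (2 * h - 1) := fun x hx =>
    Real.rpow_nonneg (sin_nonneg_of_mem_Icc hx) _
  have cG : Continuous fun x => sin x ^ (2 * h - 1) * (1 / √(1 - r ^ 2 * sin x ^ 2)) := by
    fun_prop (disch := assumption)
  have up : (∫ x in (0:ℝ)..π, sin x ^ (2 * h - 1) * (1 / √(1 - r ^ 2 * sin x ^ 2))) ≤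
      (1 / a) * ∫ x in (0:ℝ)..π, sin x ^ (2 * h - 1) := by
    rw [← intervalIntegral.integral_const_mul]
    apply intervalIntegral.integral_mono_on pi_pos.le (cG.intervalIntegrable _ _)
      (Continuous.intervalIntegrable (by fun_prop) _ _)
    intro x hx
    rw [mul_comm]
    exact mul_le_mul_of_nonneg_right (hpt x).2 (hs0 x hx)
  have lo : (1 / a) * (∫ x in (0:ℝ)..π, sin x ^ (2 * h - 1)) -
      1 / a ^ 3 * (∫ x in (0:ℝ)..π, sin x ^ (2 * h - 1) * cos x ^ 2) ≤
      (∫ x in (0:ℝ)..π, sin x ^ (2 * h - 1) * (1 / √(1 - r ^ 2 * sin x ^ 2))) := by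
    rw [← intervalIntegral.integral_const_mul, ← intervalIntegral.integral_const_mul,
      ← intervalIntegral.integral_sub]
    · apply intervalIntegral.integral_mono_on pi_pos.le
        (Continuous.intervalIntegrable (by fun_prop) _ _) (cG.intervalIntegrable _ _)
      intro x hx
      have := mul_le_mul_of_nonneg_left (hpt x).1 (hs0 x hx)
      linarith
    all_goals exact Continuous.intervalIntegrable (by fun_prop) _ _
  rw [hcs] at lo
  generalize (∫ x in (0:ℝ)..π, sin x ^ (2 * h - 1) * (1 / √(1 - r ^ 2 * sin x ^ 2))) = G at *
  generalize (∫ x in (0:ℝ)..π, sin x ^ (2 * h - 1)) = J at *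
  have hC : 0 ≤ 1 / a ^ 3 * (1 / (2 * h + 1)) := by positivity
  rw [abs_le]
  constructor
  · have : 1 / a - 1 / a ^ 3 * (1 / (2 * h + 1)) ≤ G / J := by
      rw [le_div_iff₀ hJ]; linarith
    linarith
  · have : G / J ≤ 1 / a := by
      rw [div_le_iff₀ hJ]; exact up
    linarith

open MeasureTheory Real in
lemma wat_transform (r h : ℝ) (r0 : 0 < r) (r1 : r < 1) (hh : 1 ≤ h) :
    (4 * r / (1 + r) ^ 2) ^ h * twoF1 h h (2 * h) (4 * r / (1 + r) ^ 2) = (4 * r) ^ h *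
    ((∫ x in (0:ℝ)..π, sin x ^ (2 * h - 1) * (1 / √(1 - r ^ 2 * sin x ^ 2))) /
      (∫ x in (0:ℝ)..π, sin x ^ (2 * h - 1))) := by
  have hJ := wat_J_pos h hh
  have hw0 : 0 < 4 * r / (1 + r) ^ 2 := by positivity
  have hw1 : 4 * r / (1 + r) ^ 2 < 1 := by
    rw [div_lt_one (by positivity)]; nlinarith [sq_pos_of_pos (sub_pos.2 r1)]
  have he := wat_euler _ h hw0 hw1 hh
  rw [mul_div_assoc', eq_div_iff hJ.ne', mul_assoc, he, ← wat_cov r h r0 r1 hh,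
    ← intervalIntegral.integral_const_mul, ← intervalIntegral.integral_const_mul]
  congr 1
  ext x
  have hp : 0 < 1 + r ^ 2 - 2 * r * cos x := by
    nlinarith [cos_le_one x, sq_pos_of_pos (sub_pos.2 r1)]
  have e : 1 - 4 * r / (1 + r) ^ 2 * ((1 + cos x) / 2) =
      (1 + r ^ 2 - 2 * r * cos x) / (1 + r) ^ 2 := by
    field_simp; ring
  rw [e, Real.div_rpow (by positivity) (by positivity), Real.div_rpow hp.le (by positivity),
    Real.rpow_neg (show 0 ≤ (1 + r) ^ 2 by positivity)]
  have : ((1 + r) ^ 2) ^ h ≠ 0 := by positivity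
  field_simp

/-- Watson's asymptotics: for fixed `w ∈ (0,1)`,
`k_h(w) = w^h ₂F₁(h,h;2h;w) ∼ (4ρ)^h / √(1−ρ²)` as `h → ∞`. -/
theorem watson_block_asymptotics (w : ℝ) (hw0 : 0 < w) (hw1 : w < 1) :
    Tendsto (fun h : ℝ =>
        (w ^ h * twoF1 h h (2 * h) w) /
          ((4 * ((1 - Real.sqrt (1 - w)) / (1 + Real.sqrt (1 - w)))) ^ h /
            Real.sqrt (1 - ((1 - Real.sqrt (1 - w)) / (1 + Real.sqrt (1 - w))) ^ 2)))
      atTop (nhds 1) := by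
  have hq2 : Real.sqrt (1 - w) ^ 2 = 1 - w := Real.sq_sqrt (by linarith)
  have hq0 : 0 < Real.sqrt (1 - w) := Real.sqrt_pos.2 (by linarith)
  have hq1 : Real.sqrt (1 - w) < 1 := by
    rw [Real.sqrt_lt' one_pos]; linarith
  set q := Real.sqrt (1 - w)
  have r0 : 0 < (1 - q) / (1 + q) := div_pos (by linarith) (by linarith)
  have r1 : (1 - q) / (1 + q) < 1 := by rw [div_lt_one (by linarith)]; linarith
  have hwr : w = 4 * ((1 - q) / (1 + q)) / (1 + (1 - q) / (1 + q)) ^ 2 := by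
    have : 1 + (1 - q) / (1 + q) = 2 / (1 + q) := by field_simp; ring
    rw [this]
    field_simp
    linarith
  generalize (1 - q) / (1 + q) = r at *
  have ha : 0 < Real.sqrt (1 - r ^ 2) := Real.sqrt_pos.2 (by nlinarith)
  have lim : Tendsto (fun h : ℝ =>
      (∫ x in (0:ℝ)..Real.pi, Real.sin x ^ (2 * h - 1) *
        (1 / Real.sqrt (1 - r ^ 2 * Real.sin x ^ 2))) /
      (∫ x in (0:ℝ)..Real.pi, Real.sin x ^ (2 * h - 1))) atTop
      (nhds (1 / Real.sqrt (1 - r ^ 2))) := by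
    rw [tendsto_iff_dist_tendsto_zero]
    have hb : Tendsto (fun h : ℝ => (1 / Real.sqrt (1 - r ^ 2) ^ 3) * (1 / (2 * h + 1)))
        atTop (nhds 0) := by
      suffices hz : Tendsto (fun h : ℝ => 1 / (2 * h + 1)) atTop (nhds 0) by
        simpa only [mul_zero] using hz.const_mul (1 / Real.sqrt (1 - r ^ 2) ^ 3)
      simp only [one_div]
      apply tendsto_inv_atTop_zero.comp
      exact tendsto_atTop_add_const_right _ _ (tendsto_id.const_mul_atTop two_pos)
    refine squeeze_zero' (Eventually.of_forall fun _ => dist_nonneg) ?_ hb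
    filter_upwards [eventually_ge_atTop 1] with h hh
    exact wat_bound r h r0 r1 hh
  have lim2 := lim.const_mul (Real.sqrt (1 - r ^ 2))
  rw [mul_one_div_cancel ha.ne'] at lim2
  refine lim2.congr' ?_
  filter_upwards [eventually_ge_atTop 1] with h hh
  have ht := wat_transform r h r0 r1 hh
  rw [← hwr] at ht
  rw [ht]
  have : (4 * r) ^ h ≠ 0 := by positivity
  field_simp
end

section
/- ∑_{k=1}^∞ 1/(2 sinh(kπ))² = (1/8)(1/3 − 1/π). -/
open scoped ArithmeticFunction.sigma in
theorem lambert_aux (r : ℝ) (h0 : 0 < r) (h1 : r < 1) :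
    ∑' e : ℕ+, (σ 1 e : ℝ) * r ^ (e : ℕ) =
      ∑' k : ℕ, r ^ (k + 1) / (1 - r ^ (k + 1)) ^ 2 := by
  have hr : ‖r‖ < 1 := by rwa [Real.norm_of_nonneg h0.le]
  rw [← tsum_prod_pow_eq_tsum_sigma 1 hr,
    tsum_pnat_eq_tsum_succ (f := fun d ↦ ∑' c : ℕ+, ((c : ℕ) : ℝ) ^ 1 * r ^ (d * c : ℕ))]
  refine tsum_congr fun k ↦ ?_
  have hk : ‖r ^ (k + 1)‖ < 1 := by
    rw [norm_pow]; exact pow_lt_one₀ (norm_nonneg _) hr (by omega)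
  have hs := (hasSum_coe_mul_geometric_of_norm_lt_one hk)
  rw [← hs.tsum_eq, hs.summable.tsum_eq_zero_add,
    tsum_pnat_eq_tsum_succ (f := fun c ↦ (c : ℝ) ^ 1 * r ^ ((k + 1) * c : ℕ))]
  simp [pow_mul]

theorem G2_I_eq : EisensteinSeries.G2 UpperHalfPlane.I = (Real.pi : ℂ) := by
  have h := EisensteinSeries.G2_S_transform UpperHalfPlane.I
  have hS : ModularGroup.S • UpperHalfPlane.I = UpperHalfPlane.I := by
    rw [UpperHalfPlane.ext_iff, UpperHalfPlane.modular_S_smul]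
    simp
  rw [hS] at h
  simp only [UpperHalfPlane.coe_I, Complex.I_sq] at h
  rw [mul_div_assoc, div_self Complex.I_ne_zero] at h
  have h2 : (2 : ℂ) * EisensteinSeries.G2 UpperHalfPlane.I = 2 * Real.pi := by
    linear_combination h
  exact mul_left_cancel₀ two_ne_zero h2

open scoped ArithmeticFunction.sigma in
theorem sigma_sum_eq : ∑' e : ℕ+, (σ 1 e : ℝ) * Real.exp (-(2 * Real.pi)) ^ (e : ℕ) =
    (1 / 8) * (1 / 3 - 1 / Real.pi) := by
  have h := EisensteinSeries.G2_eq_tsum_cexp UpperHalfPlane.I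
  have hq : Complex.exp (2 * Real.pi * Complex.I * (UpperHalfPlane.I : UpperHalfPlane)) =
      ((Real.exp (-(2 * Real.pi)) : ℝ) : ℂ) := by
    rw [UpperHalfPlane.coe_I, mul_assoc, Complex.I_mul_I]
    push_cast
    congr 1
    ring
  rw [G2_I_eq, hq, riemannZeta_two] at h
  have h' : Real.pi = 2 * (Real.pi ^ 2 / 6) - 8 * Real.pi ^ 2 *
      ∑' e : ℕ+, (σ 1 e : ℝ) * Real.exp (-(2 * Real.pi)) ^ (e : ℕ) := by
    apply Complex.ofReal_injective
    rw [h]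
    push_cast
    rfl
  have hp := Real.pi_ne_zero
  have hp2 : 8 * Real.pi ^ 2 ≠ 0 := by positivity
  apply mul_left_cancel₀ hp2
  rw [show 8 * Real.pi ^ 2 * ((1 / 8) * (1 / 3 - 1 / Real.pi)) = Real.pi ^ 2 / 3 - Real.pi by
    field_simp]
  linarith

theorem sinh_series_eval :
    ∑' k : ℕ, (1 / (2 * Real.sinh ((k + 1) * Real.pi)) ^ 2) =
      (1 / 8) * (1 / 3 - 1 / Real.pi) := by
  have hp := Real.pi_pos
  rw [← sigma_sum_eq, lambert_aux _ (Real.exp_pos _) (by rw [Real.exp_lt_one_iff]; linarith)]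
  refine tsum_congr fun k ↦ ?_
  set x : ℝ := (k + 1) * Real.pi with hx
  have hxp : 0 < x := by positivity
  have he : Real.exp (-(2 * Real.pi)) ^ (k + 1) = Real.exp (-x) ^ 2 := by
    rw [← Real.exp_nat_mul, ← Real.exp_nat_mul]
    congr 1
    push_cast
    rw [hx]; ring
  have hlt : Real.exp (-x) < 1 := by rw [Real.exp_lt_one_iff]; linarith
  have hpos := Real.exp_pos (-x)
  have hinv : Real.exp x = (Real.exp (-x))⁻¹ := by rw [Real.exp_neg, inv_inv]
  rw [he, Real.sinh_eq, hinv]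
  generalize Real.exp (-x) = y at *
  have hy : 1 - y ^ 2 ≠ 0 := by nlinarith
  have : 2 * ((y⁻¹ - y) / 2) = (1 - y ^ 2) / y := by field_simp
  rw [this, div_pow, one_div_div]
end
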